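/- Let D be a union of q^t-orbits with M = M(D) ≠ 0, and let H_M(k,b) be an involved hypercolumn in the computation of d*(M), with 1 ≤ k ≤ s and b ∈ Z_{r_k}. If d*(H_M(k,b)) = 1, then mad(M) = d*(M). -/

import Mathlib

open Classical

noncomputable section

namespace AbelianCodes

/-- The index set `I = Z_{r 0} × ⋯ × Z_{r (s-1)}`. -/
abbrev Idx {s : ℕ} (r : Fin s → ℕ) : Type := ∀ k, ZMod (r k)

variable {F : Type*} [Field F]

/-- The support of a hypermatrix. -/
def hsupp {s : ℕ} {r : Fin s → ℕ} (M : Idx r → F) : Set (Idx r) := {i | M i ≠ 0}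

/-- The hypercolumn `H_M(k,b)` of a hypermatrix, viewed as an `(s-1)`-dimensional
hypermatrix indexed by `∏_{j ≠ k} Z_{r j}`. -/
def hypercol {s : ℕ} {r : Fin (s+1) → ℕ} (M : Idx r → F) (k : Fin (s+1)) (b : ZMod (r k)) :
    Idx (fun j => r (k.succAbove j)) → F :=
  fun i => M (k.insertNth b i)

/-- `ω_M(k,b)`: the number of consecutive zero hypercolumns
`H_M(k,b+1), H_M(k,b+2), …` (indices modulo `r k`). -/
def runLen {s : ℕ} {r : Fin (s+1) → ℕ} (M : Idx r → F) (k : Fin (s+1)) (b : ZMod (r k)) : ℕ :=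
  ((Finset.Ico 1 (r k)).filter
    (fun j => ∀ m : ℕ, m ∈ Finset.Icc 1 j → hypercol M k (b + (m : ZMod (r k))) = 0)).card

/-- The apparent distance `d*(M)` of a hypermatrix, defined recursively on the
number of variables.  (A `0`-dimensional hypermatrix is a scalar, of apparent
distance `1` if nonzero and `0` otherwise; with this convention the `1`-dimensional
case becomes `max {ω_M(b)+1 : a_b ≠ 0}` and the higher-dimensional case becomes
`max_k max {(ω_M(k,b)+1)·d*(H_M(k,b)) : H_M(k,b) ≠ 0}`, since zero hypermatrices
have apparent distance `0`.) -/
def apd : {s : ℕ} → (r : Fin s → ℕ) → (Idx r → F) → ℕ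
  | 0, _, M => if M finZeroElim = 0 then 0 else 1
  | _+1, r, M =>
      Finset.univ.sup fun k =>
        Finset.univ.sup fun b : Fin (r k) =>
          (runLen M k ((b : ℕ) : ZMod (r k)) + 1) *
            apd (fun j => r (k.succAbove j)) (hypercol M k ((b : ℕ) : ZMod (r k)))

/-- The `q^t`-orbit `Q_t(a)` of `a ∈ I`. -/
def qOrbit {s : ℕ} (r : Fin s → ℕ) (q t : ℕ) (a : Idx r) : Set (Idx r) :=
  {i | ∃ n : ℕ, ∀ k, i k = (q : ZMod (r k)) ^ (t * n) * a k}

/-- `D` is a union of `q^t`-orbits. -/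
def OrbitUnion {s : ℕ} (r : Fin s → ℕ) (q t : ℕ) (D : Set (Idx r)) : Prop :=
  ∀ a ∈ D, qOrbit r q t a ⊆ D

/-- The hypermatrix afforded by `D ⊆ I`: entry `0` at indices in `D`, entry `1` elsewhere. -/
def afforded {s : ℕ} (r : Fin s → ℕ) (D : Set (Idx r)) : Idx r → F :=
  fun i => if i ∈ D then 0 else 1

/-- `M` is a `q^t`-orbits hypermatrix, i.e. the hypermatrix afforded by some union
of `q^t`-orbits. -/
def IsOrbitMx {s : ℕ} (r : Fin s → ℕ) (q t : ℕ) (M : Idx r → F) : Prop :=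
  ∃ D : Set (Idx r), OrbitUnion r q t D ∧ M = afforded r D

/-- The minimum apparent distance `mad(M) = min {d*(P) : P a q^t-orbits hypermatrix,
`0 ≠ P ≤ M`}`, where `P ≤ M` means `supp P ⊆ supp M`. -/
def mad {s : ℕ} (r : Fin s → ℕ) (q t : ℕ) (M : Idx r → F) : ℕ :=
  sInf {d | ∃ P : Idx r → F, IsOrbitMx r q t P ∧ P ≠ 0 ∧ hsupp P ⊆ hsupp M ∧ apd r P = d}

/-- The `q^t`-cyclotomic coset of `b` modulo `r`. -/
def cycCoset (r q t : ℕ) (b : ZMod r) : Set (ZMod r) :=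
  {x | ∃ n : ℕ, x = (q : ZMod r) ^ (t * n) * b}


theorem le_apd {F : Type*} [Field F] {s : ℕ} (r : Fin (s+1) → ℕ) (hr : ∀ k, 0 < r k)
    (P : Idx r → F) (k : Fin (s+1)) (c : ZMod (r k)) :
    (runLen P k c + 1) * apd (fun j => r (k.succAbove j)) (hypercol P k c) ≤ apd r P := by
  haveI : NeZero (r k) := ⟨(hr k).ne'⟩
  have h1 : ((c.val : ℕ) : ZMod (r k)) = c := ZMod.natCast_zmod_val c
  rw [apd]
  refine le_trans ?_ (Finset.le_sup (Finset.mem_univ k))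
  refine le_trans ?_ (Finset.le_sup (Finset.mem_univ (⟨c.val, ZMod.val_lt c⟩ : Fin (r k))))
  simp only [h1]
  exact le_rfl

theorem hypercol_ne_zero {F : Type*} [Field F] {s : ℕ} {r : Fin (s+1) → ℕ}
    (P : Idx r → F) (k : Fin (s+1)) (i : Idx r) (hi : P i ≠ 0) : hypercol P k (i k) ≠ 0 := by
  intro h
  have := congrFun h (k.removeNth i)
  simp only [hypercol, Fin.insertNth_self_removeNth, Pi.zero_apply] at this
  exact hi this

theorem apd_pos {F : Type*} [Field F] {s : ℕ} (r : Fin s → ℕ) (hr : ∀ k, 0 < r k)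
    (P : Idx r → F) (hP : P ≠ 0) : 1 ≤ apd r P := by
  obtain ⟨i, hi⟩ := Function.ne_iff.mp hP
  induction s with
  | zero =>
    rw [apd, if_neg]
    intro h
    apply hi
    rw [Subsingleton.elim i finZeroElim, h]
    rfl
  | succ s ih =>
    have hc := hypercol_ne_zero P 0 i hi
    obtain ⟨x, hx⟩ := Function.ne_iff.mp hc
    have h1 := ih (fun j => r ((0 : Fin (s+1)).succAbove j)) (fun j => hr _) _ hc x hx
    refine le_trans ?_ (le_apd r hr P 0 (i 0))
    exact Nat.mul_pos (Nat.succ_pos _) h1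

theorem runLen_spec {F : Type*} [Field F] {s : ℕ} {r : Fin (s+1) → ℕ} (hr : ∀ k, 0 < r k)
    (M : Idx r → F) (k : Fin (s+1)) (b : ZMod (r k)) :
    runLen M k b < r k ∧
      ∀ m : ℕ, 1 ≤ m → m ≤ runLen M k b → hypercol M k (b + (m : ZMod (r k))) = 0 := by
  constructor
  · have h := Finset.card_filter_le (Finset.Ico 1 (r k))
      (fun j => ∀ m : ℕ, m ∈ Finset.Icc 1 j → hypercol M k (b + (m : ZMod (r k))) = 0)
    rw [Nat.card_Ico] at h
    have := hr k
    unfold runLen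
    omega
  · intro m hm1 hm
    by_contra hne
    have hsub : ((Finset.Ico 1 (r k)).filter
      (fun j => ∀ m : ℕ, m ∈ Finset.Icc 1 j → hypercol M k (b + (m : ZMod (r k))) = 0)) ⊆
        Finset.Ico 1 m := by
      intro j hj
      simp only [Finset.mem_filter, Finset.mem_Ico] at hj
      rw [Finset.mem_Ico]
      refine ⟨hj.1.1, ?_⟩
      by_contra hlt
      exact hne (hj.2 m (Finset.mem_Icc.mpr ⟨hm1, by omega⟩))
    have h := Finset.card_le_card hsub
    rw [Nat.card_Ico] at h
    unfold runLen at hm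
    omega

theorem le_runLen {F : Type*} [Field F] {s : ℕ} {r : Fin (s+1) → ℕ}
    (M : Idx r → F) (k : Fin (s+1)) (b : ZMod (r k)) (w : ℕ) (hw : w < r k)
    (h : ∀ m : ℕ, 1 ≤ m → m ≤ w → hypercol M k (b + (m : ZMod (r k))) = 0) :
    w ≤ runLen M k b := by
  have hsub : Finset.Ico 1 (w+1) ⊆ ((Finset.Ico 1 (r k)).filter
      (fun j => ∀ m : ℕ, m ∈ Finset.Icc 1 j → hypercol M k (b + (m : ZMod (r k))) = 0)) := by
    intro j hj
    rw [Finset.mem_Ico] at hj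
    simp only [Finset.mem_filter, Finset.mem_Ico]
    refine ⟨by omega, fun m hm => ?_⟩
    rw [Finset.mem_Icc] at hm
    exact h m hm.1 (by omega)
  have := Finset.card_le_card hsub
  rw [Nat.card_Ico] at this
  unfold runLen
  omega

theorem runLen_succ_le_apd {F : Type*} [Field F] {s : ℕ} (r : Fin (s+1) → ℕ)
    (hr : ∀ k, 0 < r k) (M P : Idx r → F) (hP : P ≠ 0) (hPM : hsupp P ⊆ hsupp M)
    (k : Fin (s+1)) (b : ZMod (r k)) : runLen M k b + 1 ≤ apd r P := by
  haveI : NeZero (r k) := ⟨(hr k).ne'⟩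
  obtain ⟨hw, hz⟩ := runLen_spec hr M k b
  have hz' : ∀ c, hypercol M k c = 0 → hypercol P k c = 0 := by
    intro c hc
    funext x
    by_contra hx
    exact hPM (show P (k.insertNth c x) ≠ 0 from hx) (congrFun hc x)
  have hex : ∃ j : ℕ, hypercol P k (b - (j : ZMod (r k))) ≠ 0 := by
    obtain ⟨i, hi⟩ := Function.ne_iff.mp hP
    refine ⟨(b - i k).val, ?_⟩
    rw [ZMod.natCast_zmod_val, sub_sub_cancel]
    exact hypercol_ne_zero P k i hi
  have hj := Nat.find_spec hex
  have hmin : ∀ m : ℕ, m < Nat.find hex → hypercol P k (b - (m : ZMod (r k))) = 0 :=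
    fun m hm => not_not.mp (Nat.find_min hex hm)
  generalize Nat.find hex = j at hj hmin
  have hrun : runLen M k b ≤ runLen P k (b - (j : ZMod (r k))) := by
    refine le_runLen P k _ _ hw fun m hm1 hm => ?_
    rcases le_or_gt m j with h | h
    · have := hmin (j - m) (by omega)
      rw [Nat.cast_sub h] at this
      rwa [show b - (j : ZMod (r k)) + m = b - (j - m) by ring]
    · have := hz' _ (hz (m - j) (by omega) (by omega))
      rw [Nat.cast_sub h.le] at this
      rwa [show b - (j : ZMod (r k)) + m = b + (m - j) by ring]
  have h1 := apd_pos _ (fun j => hr _) _ hj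
  have h2 := le_apd r hr P k (b - (j : ZMod (r k)))
  nlinarith

/-- Let `M = M(D) ≠ 0` be a `q^t`-orbits hypermatrix and let
`H_M(k,b)` be an involved hypercolumn in the computation of `d*(M)`.  If
`d*(H_M(k,b)) = 1`, then `mad(M) = d*(M)`. -/
theorem mad_eq_apd_of_involved_hypercol_one
    {s : ℕ} (r : Fin (s+1) → ℕ)
    (p q t : ℕ) (hp : p.Prime) (hq : ∃ m : ℕ, 0 < m ∧ q = p ^ m) (ht : 0 < t)
    (hr : ∀ k, 0 < r k) (hpr : ∀ k, ¬ p ∣ r k)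
    {F : Type*} [Field F]
    (M : Idx r → F) (hM : IsOrbitMx r q t M) (hM0 : M ≠ 0)
    (k : Fin (s+1)) (b : ZMod (r k))
    (hcol : hypercol M k b ≠ 0)
    (hinv : apd r M =
      (runLen M k b + 1) * apd (fun j => r (k.succAbove j)) (hypercol M k b))
    (hone : apd (fun j => r (k.succAbove j)) (hypercol M k b) = 1) :
    mad r q t M = apd r M := by
  rw [hone, mul_one] at hinv
  unfold mad
  apply le_antisymm
  · exact Nat.sInf_le ⟨M, hM, hM0, subset_rfl, rfl⟩
  · refine le_csInf ⟨_, M, hM, hM0, subset_rfl, rfl⟩ ?_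
    rintro d ⟨P, -, hP, hPM, rfl⟩
    rw [hinv]
    exact runLen_succ_le_apd r hr M P hP hPM k b

end AbelianCodes
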